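/- Let (X, ℬ, μ, T) be a measure-preserving transformation of a probability space, and let f ∈ L¹(X, μ). Then the limit f* := lim_{n→∞} (1/n) S_n f exists μ-almost everywhere, f* is T-invariant up to a set of measure 0 (f*∘T = f* μ-a.e.), and for every measurable T-invariant set A: ∫_A f dμ = ∫_A f* dμ. (Birkhoff's ergodic theorem.) -/

import Mathlib

/-!
Let `I` be the σ-algebra of `T`-invariant sets and `F = E[f | I]`; the limit is `F`. Everything
rests on the bound `ae_birkhoff_le`: if `h` is integrable with integral zero over every invariant
set, then for each `ε > 0` the sums `S_n (h - ε)` are almost everywhere bounded above. Applied to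
`± (f - F)`, whose Birkhoff sums are `± (S_n f - n F)`, it gives the convergence of `S_n f / n`
to `F`.

For the bound, write `g = h - ε` and `M_n = max_{1 ≤ k ≤ n + 1} S_k g`, so that
`M_{n+1} = g + max 0 (M_n ∘ T)`. The set `A` where `M_n → ∞` is invariant, and on it
`M_{n+1} - M_n ∘ T = g + max (-M_n ∘ T) 0` tends to `g`, dominated by `|g| + |g ∘ T|`.
Since `M_n` increases and `μ` is `T`-invariant,
`0 ≤ ∫_A (M_{n+1} - M_n) = ∫_A (M_{n+1} - M_n ∘ T) → ∫_A g = -ε μ(A)`, so `μ(A) = 0`.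
-/

open MeasureTheory Filter Topology

/-- `T` is conservative w.r.t. `μ`: every set of positive measure returns to itself. -/
def IsConservative {X : Type*} [MeasurableSpace X] (T : X → X) (μ : Measure X) : Prop :=
  ∀ A : Set X, MeasurableSet A → 0 < μ A → ∃ n ≥ 1, 0 < μ (A ∩ (T^[n]) ⁻¹' A)

/-- Birkhoff sum `S_n f = ∑_{k<n} f ∘ T^k`. -/
noncomputable def birkhoff {X : Type*} (T : X → X) (f : X → ℝ) (n : ℕ) (x : X) : ℝ :=
  ∑ k ∈ Finset.range n, f (T^[k] x)

/-- The running maximum `max_{1 ≤ k ≤ n + 1} S_k g` of Birkhoff sums. It is defined by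
the recursion `M_{n+1} = g + max 0 (M_n ∘ T)` that this maximum satisfies. -/
noncomputable def birkhoffMax {X : Type*} (T : X → X) (g : X → ℝ) : ℕ → X → ℝ
  | 0, x => g x
  | n + 1, x => g x + max 0 (birkhoffMax T g n (T x))

section Max

variable {X : Type*} (T : X → X) (g : X → ℝ)

lemma birkhoffMax_succ (n : ℕ) (x : X) :
    birkhoffMax T g (n + 1) x = g x + max 0 (birkhoffMax T g n (T x)) := rfl

lemma le_birkhoffMax (n : ℕ) (x : X) : g x ≤ birkhoffMax T g n x := by
  cases n with
  | zero => exact le_rfl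
  | succ n => exact le_add_of_nonneg_right (le_max_left _ _)

lemma birkhoffMax_le_succ (n : ℕ) (x : X) :
    birkhoffMax T g n x ≤ birkhoffMax T g (n + 1) x := by
  induction n generalizing x with
  | zero => exact le_birkhoffMax T g 1 x
  | succ n ih =>
    rw [birkhoffMax_succ, birkhoffMax_succ T g (n + 1)]
    gcongr
    exact ih (T x)

lemma birkhoff_succ' (n : ℕ) (x : X) :
    birkhoff T g (n + 1) x = g x + birkhoff T g n (T x) :=
  birkhoffSum_succ' T g n x

lemma birkhoff_le_birkhoffMax (n : ℕ) (x : X) :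
    birkhoff T g (n + 1) x ≤ birkhoffMax T g n x := by
  induction n generalizing x with
  | zero => simp [birkhoff, birkhoffMax]
  | succ n ih =>
    rw [birkhoff_succ', birkhoffMax_succ]
    gcongr
    exact (ih (T x)).trans (le_max_right _ _)

/-- The set of points at which the Birkhoff sums of `g` are unbounded above,
expressed through their running maximum. -/
def unboundedSet : Set X := {x | ∀ C : ℕ, ∃ n, (C : ℝ) < birkhoffMax T g n x}

lemma preimage_unboundedSet : T ⁻¹' unboundedSet T g = unboundedSet T g := by
  ext x
  constructor
  · intro hx C
    obtain ⟨K, hK⟩ := exists_nat_gt ((C : ℝ) - g x)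
    obtain ⟨n, hn⟩ := hx K
    refine ⟨n + 1, ?_⟩
    rw [birkhoffMax_succ]
    linarith [le_max_right 0 (birkhoffMax T g n (T x))]
  · intro hx C
    obtain ⟨K, hK⟩ := exists_nat_gt ((C : ℝ) + g x)
    obtain ⟨n, hn⟩ := hx K
    have hn := hn.trans_le (birkhoffMax_le_succ T g n x)
    rw [birkhoffMax_succ] at hn
    refine ⟨n, ?_⟩
    have h : (C : ℝ) < max 0 (birkhoffMax T g n (T x)) := by linarith
    rcases lt_max_iff.1 h with h | h
    · exact absurd h (not_lt.2 C.cast_nonneg)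
    · exact h

lemma exists_birkhoff_le {x : X} (hx : x ∉ unboundedSet T g) :
    ∃ C : ℝ, ∀ n, birkhoff T g n x ≤ C := by
  simp only [unboundedSet, Set.mem_ofPred_eq, not_forall, not_exists, not_lt] at hx
  obtain ⟨C, hC⟩ := hx
  refine ⟨C, fun n => ?_⟩
  cases n with
  | zero => simp [birkhoff]
  | succ n => exact (birkhoff_le_birkhoffMax T g n x).trans (hC n)

end Max

section Measure

variable {X : Type*} [MeasurableSpace X] {μ : Measure X} {T : X → X}

lemma measurable_birkhoffMax (hT : Measurable T) {g : X → ℝ} (hg : Measurable g) (n : ℕ) :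
    Measurable (birkhoffMax T g n) := by
  induction n with
  | zero => exact hg
  | succ n ih => exact hg.add (measurable_const.max (ih.comp hT))

lemma integrable_birkhoffMax (hT : MeasurePreserving T μ μ) {g : X → ℝ} (hg : Integrable g μ)
    (n : ℕ) : Integrable (birkhoffMax T g n) μ := by
  induction n with
  | zero => exact hg
  | succ n ih =>
    exact hg.add ((integrable_zero X ℝ μ).sup (hT.integrable_comp_of_integrable ih))

lemma measurableSet_unboundedSet (hT : Measurable T) {g : X → ℝ} (hg : Measurable g) :
    MeasurableSet (unboundedSet T g) := by
  simp only [unboundedSet, Set.ofPred_forall, Set.ofPred_exists]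
  exact .iInter fun C => .iUnion fun n =>
    measurableSet_lt measurable_const (measurable_birkhoffMax hT hg n)

/-- A form of the maximal ergodic theorem: the integral of `g` over the set where its Birkhoff
sums are unbounded above is nonnegative. -/
lemma setIntegral_unboundedSet_nonneg (hT : MeasurePreserving T μ μ) {g : X → ℝ}
    (hgm : Measurable g) (hg : Integrable g μ) :
    0 ≤ ∫ x in unboundedSet T g, g x ∂μ := by
  set A := unboundedSet T g with hA
  have hAm : MeasurableSet A := measurableSet_unboundedSet hT.measurable hgm
  have hTA : MeasurePreserving T (μ.restrict A) (μ.restrict A) := by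
    have := hT.restrict_preimage hAm
    rwa [hA, preimage_unboundedSet] at this
  have hMi (n : ℕ) : Integrable (birkhoffMax T g n) (μ.restrict A) :=
    (integrable_birkhoffMax hT hg n).restrict
  have hgi : Integrable g (μ.restrict A) := hg.restrict
  have key (n : ℕ) :
      0 ≤ ∫ x in A, (birkhoffMax T g (n + 1) x - birkhoffMax T g n (T x)) ∂μ := by
    have hcomp : ∫ x in A, birkhoffMax T g n (T x) ∂μ = ∫ x in A, birkhoffMax T g n x ∂μ := by
      conv_rhs => rw [← hTA.map_eq]
      refine (integral_map hTA.aemeasurable ?_).symm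
      rw [hTA.map_eq]
      exact (hMi n).aestronglyMeasurable
    have hMT : Integrable (fun x => birkhoffMax T g n (T x)) (μ.restrict A) :=
      hTA.integrable_comp_of_integrable (hMi n)
    rw [integral_sub (hMi (n + 1)) hMT, hcomp, sub_nonneg]
    exact integral_mono (hMi n) (hMi (n + 1)) (birkhoffMax_le_succ T g n)
  refine ge_of_tendsto' (tendsto_integral_of_dominated_convergence
    (fun x => |g x| + |g (T x)|) (fun n => ?_) ?_ (fun n => ?_) ?_) key
  · exact ((hMi (n + 1)).sub (hTA.integrable_comp_of_integrable (hMi n))).aestronglyMeasurable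
  · exact hgi.abs.add (hTA.integrable_comp_of_integrable hgi).abs
  · refine ae_of_all _ fun x => ?_
    have h := le_birkhoffMax T g n (T x)
    rw [birkhoffMax_succ, Real.norm_eq_abs]
    grind
  · filter_upwards [ae_restrict_mem hAm] with x hx
    rw [hA, ← preimage_unboundedSet] at hx
    obtain ⟨N, hN⟩ := hx 0
    refine tendsto_const_nhds.congr' ?_
    filter_upwards [eventually_ge_atTop N] with n hn
    have h := monotone_nat_of_le_succ (fun k => birkhoffMax_le_succ T g k (T x)) hn
    rw [birkhoffMax_succ]
    grind

/-- The Birkhoff sums of `h` grow at most like `n ε` for every `ε > 0`, when `h` has integral zero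
over all invariant sets. -/
lemma ae_birkhoff_le [IsFiniteMeasure μ] (hT : MeasurePreserving T μ μ) {h : X → ℝ}
    (hm : Measurable h) (hi : Integrable h μ)
    (h0 : ∀ A, MeasurableSet A → T ⁻¹' A = A → ∫ x in A, h x ∂μ = 0) {ε : ℝ} (hε : 0 < ε) :
    ∀ᵐ x ∂μ, ∃ C : ℝ, ∀ n : ℕ, birkhoff T h n x ≤ C + n * ε := by
  set g : X → ℝ := fun x => h x - ε with hg
  have hgm : Measurable g := hm.sub_const ε
  have hAm := measurableSet_unboundedSet hT.measurable hgm
  have hnn := setIntegral_unboundedSet_nonneg hT hgm (hi.sub (integrable_const ε))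
  rw [hg, integral_sub hi.restrict (integrable_const ε), ← hg,
    h0 _ hAm (preimage_unboundedSet T g), setIntegral_const, smul_eq_mul] at hnn
  have hA : μ (unboundedSet T g) = 0 := by
    rw [← measureReal_eq_zero_iff]
    have := measureReal_nonneg (μ := μ) (s := unboundedSet T g)
    nlinarith
  filter_upwards [measure_eq_zero_iff_ae_notMem.1 hA] with x hx
  obtain ⟨C, hC⟩ := exists_birkhoff_le T g hx
  refine ⟨C, fun n => ?_⟩
  have := hC n
  simp only [birkhoff, hg, Finset.sum_sub_distrib, Finset.sum_const, Finset.card_range,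
    nsmul_eq_mul] at this
  simp only [birkhoff]
  linarith

end Measure

/-- An upper bound of the form `|a_n| ≤ C + n ε` for every `ε = 1 / (m + 1)` forces
`a_n / n → 0`. -/
lemma tendsto_div_of_linear_bounds {a : ℕ → ℝ}
    (h : ∀ m : ℕ, ∃ C : ℝ, ∀ n : ℕ, |a n| ≤ C + n * (1 / ((m : ℝ) + 1))) :
    Tendsto (fun n : ℕ => a n / (n : ℝ)) atTop (𝓝 0) := by
  rw [Metric.tendsto_atTop']
  intro ε hε
  obtain ⟨m, hm⟩ := exists_nat_one_div_lt (half_pos hε)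
  obtain ⟨C, hC⟩ := h m
  obtain ⟨N, hN⟩ := exists_nat_gt (C / (ε / 2))
  refine ⟨N, fun n hn => ?_⟩
  have hn' : (N : ℝ) < n := by exact_mod_cast hn
  have hn0 : (0 : ℝ) < n := (Nat.cast_nonneg N).trans_lt hn'
  rw [dist_zero_right, norm_div, Real.norm_eq_abs, Real.norm_natCast, div_lt_iff₀ hn0]
  rw [div_lt_iff₀ (half_pos hε)] at hN
  have := hC n
  nlinarith

/-- Birkhoff's pointwise ergodic theorem. -/
theorem birkhoff_ergodic_theorem {X : Type*} [MeasurableSpace X] (μ : Measure X)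
    [IsProbabilityMeasure μ] (T : X → X) (hT : MeasurePreserving T μ μ)
    (f : X → ℝ) (hf : Integrable f μ) :
    ∃ fstar : X → ℝ,
      (∀ᵐ x ∂μ, Tendsto (fun n : ℕ => birkhoff T f n x / (n : ℝ)) atTop (𝓝 (fstar x))) ∧
      (∀ᵐ x ∂μ, fstar (T x) = fstar x) ∧
      ∀ A : Set X, MeasurableSet A → T ⁻¹' A = A →
        ∫ x in A, f x ∂μ = ∫ x in A, fstar x ∂μ := by
  have hle := MeasurableSpace.invariants_le T
  set F : X → ℝ := μ[f | MeasurableSpace.invariants T] with hF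
  have hFI : Measurable[MeasurableSpace.invariants T] F := stronglyMeasurable_condExp.measurable
  have hFm : Measurable F := hFI.mono hle le_rfl
  have hFi : Integrable F μ := integrable_condExp
  have hFT : F ∘ T = F := MeasurableSpace.comp_eq_of_measurable_invariants hFI
  have hFA (A : Set X) (hA : MeasurableSet A) (hTA : T ⁻¹' A = A) :
      ∫ x in A, f x ∂μ = ∫ x in A, F x ∂μ :=
    (setIntegral_condExp hle hf
      (MeasurableSpace.measurableSet_invariants.2 ⟨hA, hTA⟩)).symm
  refine ⟨F, ?_, ae_of_all _ fun x => congrFun hFT x, hFA⟩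
  -- `f` is only a.e. measurable: the Birkhoff sums are computed with a measurable version `f'`.
  set f' : X → ℝ := hf.1.mk f with hf'
  have hff' : f =ᵐ[μ] f' := hf.1.ae_eq_mk
  have hf'm : Measurable f' := hf.1.stronglyMeasurable_mk.measurable
  have hf'i : Integrable f' μ := hf.congr hff'
  have hsum : ∀ᵐ x ∂μ, ∀ n, birkhoff T f n x = birkhoff T f' n x := by
    have : ∀ᵐ x ∂μ, ∀ k, f (T^[k] x) = f' (T^[k] x) :=
      ae_all_iff.2 fun k => (hT.iterate k).quasiMeasurePreserving.ae hff'
    filter_upwards [this] with x hx n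
    exact Finset.sum_congr rfl fun k _ => hx k
  set h : X → ℝ := fun x => f' x - F x with hh
  have h0 (A : Set X) (hA : MeasurableSet A) (hTA : T ⁻¹' A = A) : ∫ x in A, h x ∂μ = 0 := by
    rw [hh, integral_sub hf'i.restrict hFi.restrict, ← hFA A hA hTA, sub_eq_zero]
    exact (integral_congr_ae (ae_restrict_of_ae hff')).symm
  have hFk (k : ℕ) (x : X) : F (T^[k] x) = F x := by
    induction k generalizing x with
    | zero => rfl
    | succ k ih => rw [Function.iterate_succ_apply, ih, ← Function.comp_apply (f := F), hFT]
  have hbs (n : ℕ) (x : X) : birkhoff T h n x = birkhoff T f' n x - n * F x := by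
    simp [birkhoff, hh, hFk, Finset.sum_sub_distrib]
  have hup (m : ℕ) := ae_birkhoff_le hT (hf'm.sub hFm) (hf'i.sub hFi) h0
    (Nat.one_div_pos_of_nat (α := ℝ) (n := m))
  have hlo (m : ℕ) := ae_birkhoff_le hT (hf'm.sub hFm).neg (hf'i.sub hFi).neg
    (fun A hA hTA => (integral_neg h).trans (by rw [h0 A hA hTA, neg_zero]))
    (Nat.one_div_pos_of_nat (α := ℝ) (n := m))
  filter_upwards [hsum, ae_all_iff.2 hup, ae_all_iff.2 hlo] with x hx hux hlx
  have hlim : Tendsto (fun n : ℕ => birkhoff T h n x / (n : ℝ)) atTop (𝓝 0) := by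
    refine tendsto_div_of_linear_bounds fun m => ?_
    obtain ⟨C, hC⟩ := hux m
    obtain ⟨D, hD⟩ := hlx m
    refine ⟨max C D, fun n => abs_le'.2 ⟨?_, ?_⟩⟩
    · exact (hC n).trans (by gcongr; exact le_max_left C D)
    · rw [show -birkhoff T h n x = birkhoff T (-h) n x from (birkhoffSum_neg T h n x).symm]
      exact (hD n).trans (by gcongr; exact le_max_right C D)
  have hlim' := hlim.add_const (F x)
  rw [zero_add] at hlim'
  refine hlim'.congr' ?_
  filter_upwards [eventually_gt_atTop 0] with n hn
  have : (n : ℝ) ≠ 0 := by positivity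
  rw [hbs, hx n]
  field_simp
  ring
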